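/- arXiv:0812.4002 — 2 statements merged into one kernel-verified Lean document; each statement's English description precedes it below -/
import Mathlib

section
/- Let n ≥ 1 be an integer, a ≥ 0, and φ, θ ∈ ℝ. Then ∑_{l=0}^{n−1} [ exp(a·cos(φ − θ − 2πl/n)) − exp(a·cos(φ + θ − 2πl/n)) ] = 4n·∑_{j=1}^{∞} I_{jn}(a) sin(jnφ) sin(jnθ), where the series on the right converges absolutely. Equivalently, the signed sum ∑_{w ∈ D₂(n)} det(w) e^{⟨x, w y⟩} over the dihedral group (rotations with sign +1, reflections with sign −1), with x = ρ(cos φ, sin φ), y = r(cos θ, sin θ), a = ρr, equals the right-hand side; this identity underlies the semigroup density of planar Brownian motion killed when it first hits the boundary of the wedge of angle π/n. -/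
open Real Finset

/-- The modified Bessel function `I_ν(x) = ∑_{q=0}^∞ (x/2)^{2q+ν}/(q! Γ(ν+q+1))`. -/
noncomputable def modBesselI (ν x : ℝ) : ℝ :=
  ∑' q : ℕ, (x / 2) ^ (2 * (q : ℝ) + ν) / (Nat.factorial q * Real.Gamma (ν + q + 1))

/-!
Writing `exp (x / 2 * (t + t⁻¹))` as a product of two exponential series and collecting the powers
of `t` gives the generating function `∑ m : ℤ, I_|m|(x) t ^ m`. Averaging it over the `n`-th roots
of unity keeps only the exponents divisible by `n`; at `t = exp (i ψ)` this turns the sum of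
`exp (a cos (ψ - 2πl/n))` over `l < n` into a cosine series in `nψ`. Subtracting its values at
`ψ = φ - θ` and `ψ = φ + θ` cancels the constant term and leaves products of sines.
-/

/-- The parametrisation of the pairs `(p, q)` of naturals by their difference `p - q` and their
minimum, used to collect the terms of a double series according to the difference of the indices. -/
def intProdNatEquivNatProdNat : ℤ × ℕ ≃ ℕ × ℕ where
  toFun x := (x.2 + x.1.toNat, x.2 + (-x.1).toNat)
  invFun x := ((x.1 : ℤ) - x.2, min x.1 x.2)
  left_inv := by
    rintro ⟨m, k⟩
    simp only [Prod.mk.injEq]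
    omega
  right_inv := by
    rintro ⟨p, q⟩
    simp only [Prod.mk.injEq]
    omega

lemma hasSum_pow_div_factorial_mul_pow_div_factorial {𝔸 : Type*} [NormedField 𝔸]
    [NormedAlgebra ℚ 𝔸] [CompleteSpace 𝔸] (z w : 𝔸) :
    HasSum (fun p : ℕ × ℕ => z ^ p.1 / p.1.factorial * (w ^ p.2 / p.2.factorial))
      (NormedSpace.exp (z + w)) := by
  have summable_mul := summable_mul_of_summable_norm
    (NormedSpace.norm_expSeries_div_summable z) (NormedSpace.norm_expSeries_div_summable w)
  have hasSum_mul := (NormedSpace.expSeries_div_hasSum_exp z).mul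
    (NormedSpace.expSeries_div_hasSum_exp w) summable_mul
  rwa [← NormedSpace.exp_add] at hasSum_mul

lemma modBesselI_natCast (m : ℕ) (x : ℝ) :
    modBesselI m x = ∑' k : ℕ, (x / 2) ^ (2 * k + m) / (k.factorial * (m + k).factorial) := by
  refine tsum_congr fun k => ?_
  rw [← Nat.cast_add m k, Real.Gamma_nat_eq_factorial, ← Real.rpow_natCast]
  push_cast
  rfl

lemma mul_pow_div_factorial_mul_mul_inv_pow_div_factorial {K : Type*} [Field K] (z : K) {t : K}
    (ht : t ≠ 0) (m : ℤ) (k : ℕ) :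
    (z * t) ^ (k + m.toNat) / (k + m.toNat).factorial
        * ((z * t⁻¹) ^ (k + (-m).toNat) / (k + (-m).toNat).factorial)
      = z ^ (2 * k + m.natAbs) / (k.factorial * (m.natAbs + k).factorial) * t ^ m := by
  rcases m.eq_nat_or_neg with ⟨p, rfl | rfl⟩
  all_goals
    simp only [Int.toNat_natCast, Int.toNat_neg_natCast, neg_neg, Int.natAbs_natCast,
      Int.natAbs_neg, add_zero, zpow_neg, zpow_natCast, add_comm p k, mul_pow, inv_pow]
    field_simp
    ring

theorem hasSum_modBesselI_mul_zpow (x : ℝ) {t : ℂ} (ht : t ≠ 0) :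
    HasSum (fun m : ℤ => (modBesselI m.natAbs x : ℂ) * t ^ m)
      (Complex.exp (x / 2 * (t + t⁻¹))) := by
  have hasSum_by_difference : HasSum (fun y : ℤ × ℕ => (x / 2 : ℂ) ^ (2 * y.2 + y.1.natAbs)
      / (y.2.factorial * (y.1.natAbs + y.2).factorial) * t ^ y.1)
      (Complex.exp (x / 2 * (t + t⁻¹))) := by
    have hasSum_pairs :=
      hasSum_pow_div_factorial_mul_pow_div_factorial (x / 2 * t : ℂ) (x / 2 * t⁻¹)
    rw [mul_add, Complex.exp_eq_exp_ℂ]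
    exact (intProdNatEquivNatProdNat.hasSum_iff.mpr hasSum_pairs).congr_fun fun y =>
      (mul_pow_div_factorial_mul_mul_inv_pow_div_factorial _ ht y.1 y.2).symm
  refine hasSum_by_difference.prod_fiberwise fun m => ?_
  have fiber_sum : (modBesselI m.natAbs x : ℂ) * t ^ m = ∑' k : ℕ,
      (x / 2 : ℂ) ^ (2 * k + m.natAbs) / (k.factorial * (m.natAbs + k).factorial) * t ^ m := by
    rw [modBesselI_natCast, tsum_mul_right]
    push_cast
    rfl
  rw [fiber_sum]
  exact (hasSum_by_difference.summable.prod_factor m).hasSum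

section RootsOfUnity

variable {K : Type*} [Field K] {ζ : K} {n : ℕ}

lemma sum_range_pow_zpow_of_isPrimitiveRoot (hζ : IsPrimitiveRoot ζ n) (m : ℤ) :
    ∑ l ∈ range n, (ζ ^ l) ^ m = if (n : ℤ) ∣ m then (n : K) else 0 := by
  have pow_zpow_comm (l : ℕ) : (ζ ^ l) ^ m = (ζ ^ m) ^ l := by
    rw [← zpow_natCast, ← zpow_natCast, zpow_comm]
  simp only [pow_zpow_comm]
  split_ifs with hdvd
  · simp [(hζ.zpow_eq_one_iff_dvd m).mpr hdvd]
  · rw [geom_sum_eq (mt (hζ.zpow_eq_one_iff_dvd m).mp hdvd), ← pow_zpow_comm, hζ.pow_eq_one]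
    simp

theorem hasSum_mul_zpow_sum_rootsOfUnity [TopologicalSpace K] [ContinuousAdd K]
    (hζ : IsPrimitiveRoot ζ n) (hn : n ≠ 0) {c : ℤ → K} {s : ℕ → K} {t : K}
    (hs : ∀ l ∈ range n, HasSum (fun m : ℤ => c m * (t * ζ ^ l) ^ m) (s l)) :
    HasSum (fun k : ℤ => n * (c (n * k) * t ^ (n * k))) (∑ l ∈ range n, s l) := by
  have hasSum_ite_dvd : HasSum (fun m : ℤ => if (n : ℤ) ∣ m then n * (c m * t ^ m) else 0)
      (∑ l ∈ range n, s l) := by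
    refine (hasSum_sum hs).congr_fun fun m => ?_
    simp only [mul_zpow, ← mul_assoc, ← mul_sum, sum_range_pow_zpow_of_isPrimitiveRoot hζ]
    split_ifs <;> ring
  have mul_injective : Function.Injective fun k : ℤ => (n : ℤ) * k :=
    mul_right_injective₀ (by exact_mod_cast hn)
  have ite_dvd_eq_zero (m : ℤ) (hm : m ∉ Set.range fun k : ℤ => (n : ℤ) * k) :
      (if (n : ℤ) ∣ m then n * (c m * t ^ m) else 0) = 0 :=
    if_neg fun ⟨k, hk⟩ => hm ⟨k, hk.symm⟩
  exact ((mul_injective.hasSum_iff ite_dvd_eq_zero).mpr hasSum_ite_dvd).congr_fun fun k =>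
    (if_pos (dvd_mul_right _ k)).symm

end RootsOfUnity

section Rotations

variable {n : ℕ} (hn : n ≠ 0) (a : ℝ)
include hn

lemma hasSum_modBesselI_mul_exp_rotations (ψ : ℂ) :
    HasSum (fun k : ℤ => (n : ℂ) * (modBesselI (n * k).natAbs a
        * Complex.exp (n * k * ψ * Complex.I)))
      (∑ l ∈ range n, Complex.exp (a * Complex.cos (ψ - 2 * π * l / n))) := by
  have rotation (l : ℕ) : Complex.exp (ψ * Complex.I) * (Complex.exp (2 * π * Complex.I / n))⁻¹ ^ l
      = Complex.exp ((ψ - 2 * π * l / n) * Complex.I) := by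
    rw [← Complex.exp_neg, ← Complex.exp_nat_mul, ← Complex.exp_add]
    ring_nf
  have half_sum_eq_cos (z : ℂ) : (a : ℂ) / 2 * (Complex.exp (z * Complex.I)
      + (Complex.exp (z * Complex.I))⁻¹) = a * Complex.cos z := by
    rw [← Complex.exp_neg, Complex.cos, neg_mul]
    ring
  have hasSum_rotation (l : ℕ) : HasSum (fun m : ℤ => (modBesselI m.natAbs a : ℂ)
      * (Complex.exp (ψ * Complex.I) * (Complex.exp (2 * π * Complex.I / n))⁻¹ ^ l) ^ m)
      (Complex.exp (a * Complex.cos (ψ - 2 * π * l / n))) := by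
    rw [rotation, ← half_sum_eq_cos]
    exact hasSum_modBesselI_mul_zpow a (Complex.exp_ne_zero _)
  have hζ := (Complex.isPrimitiveRoot_exp n hn).inv
  refine (hasSum_mul_zpow_sum_rootsOfUnity hζ hn fun l _ => hasSum_rotation l).congr_fun fun k => ?_
  rw [← Complex.exp_int_mul]
  push_cast
  ring_nf

lemma hasSum_modBesselI_mul_cos_rotations (ψ : ℂ) :
    HasSum (fun j : ℕ => 2 * n * (modBesselI ((j + 1) * n) a * Complex.cos ((j + 1) * n * ψ)))
      (∑ l ∈ range n, Complex.exp (a * Complex.cos (ψ - 2 * π * l / n)) - n * modBesselI 0 a) := by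
  -- Folding `ℤ` onto `ℕ` counts the index `0` twice, so that dropping it costs a single `n * I_0`.
  have folded :=
    (hasSum_nat_add_iff' 1).mpr (hasSum_modBesselI_mul_exp_rotations hn a ψ).nat_add_neg
  simp only [sum_range_one, Nat.cast_zero, neg_zero, add_sub_add_right_eq_sub, mul_zero,
    Int.natAbs_zero, Int.cast_zero, zero_mul, Complex.exp_zero, mul_one] at folded
  refine folded.congr_fun fun j => ?_
  simp only [Int.natAbs_mul, Int.natAbs_neg, Int.natAbs_natCast, Complex.cos]
  push_cast
  ring_nf

theorem hasSum_modBesselI_mul_sin_mul_sin (φ θ : ℂ) :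
    HasSum (fun j : ℕ => 4 * n * (modBesselI ((j + 1) * n) a
        * Complex.sin ((j + 1) * n * φ) * Complex.sin ((j + 1) * n * θ)))
      (∑ l ∈ range n, (Complex.exp (a * Complex.cos (φ - θ - 2 * π * l / n))
        - Complex.exp (a * Complex.cos (φ + θ - 2 * π * l / n)))) := by
  have difference := (hasSum_modBesselI_mul_cos_rotations hn a (φ - θ)).sub
    (hasSum_modBesselI_mul_cos_rotations hn a (φ + θ))
  rw [sub_sub_sub_cancel_right, ← sum_sub_distrib] at difference
  refine difference.congr_fun fun j => ?_
  rw [mul_sub _ φ θ, mul_add _ φ θ, Complex.cos_sub, Complex.cos_add]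
  ring

end Rotations

theorem stmt_10_general (n : ℕ) (hn : 1 ≤ n) (a : ℝ) (φ θ : ℂ) :
    (Summable fun j : ℕ =>
      ‖modBesselI (((j : ℝ) + 1) * n) a * Complex.sin (((j : ℂ) + 1) * n * φ)
        * Complex.sin (((j : ℂ) + 1) * n * θ)‖)
    ∧ ∑ l ∈ range n,
        (Complex.exp (a * Complex.cos (φ - θ - 2 * π * l / n))
          - Complex.exp (a * Complex.cos (φ + θ - 2 * π * l / n)))
      = 4 * n * ∑' j : ℕ, modBesselI (((j : ℝ) + 1) * n) a
          * Complex.sin (((j : ℂ) + 1) * n * φ) * Complex.sin (((j : ℂ) + 1) * n * θ) := by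
  have hn0 : n ≠ 0 := Nat.one_le_iff_ne_zero.mp hn
  have hsum := hasSum_modBesselI_mul_sin_mul_sin hn0 a φ θ
  have h4n : (4 * n : ℂ) ≠ 0 := mul_ne_zero (by norm_num) (Nat.cast_ne_zero.mpr hn0)
  exact ⟨((summable_mul_left_iff h4n).mp hsum.summable).norm,
    by rw [← hsum.tsum_eq, tsum_mul_left]⟩

/-- For an integer `n ≥ 1`, `a ≥ 0` and `φ, θ ∈ ℝ`,
`∑_{l=0}^{n−1} [e^{a cos(φ−θ−2πl/n)} − e^{a cos(φ+θ−2πl/n)}]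
  = 4n ∑_{j≥1} I_{jn}(a) sin(jnφ) sin(jnθ)`,
the series converging absolutely. With `x = ρ(cos φ, sin φ)`, `y = r(cos θ, sin θ)`,
`a = ρr`, the left-hand side is the signed sum `∑_{w ∈ D₂(n)} det(w) e^{⟨x, wy⟩}`
underlying the heat kernel of planar Brownian motion killed at the boundary of the
wedge of angle `π/n`. -/
theorem stmt_10 (n : ℕ) (hn : 1 ≤ n) (a : ℝ) (ha : 0 ≤ a) (φ θ : ℝ) :
    (Summable fun j : ℕ =>
      |modBesselI (((j : ℝ) + 1) * n) a * Real.sin (((j : ℝ) + 1) * n * φ)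
        * Real.sin (((j : ℝ) + 1) * n * θ)|)
    ∧ ∑ l ∈ Finset.range n,
        (Real.exp (a * Real.cos (φ - θ - 2 * π * l / n))
          - Real.exp (a * Real.cos (φ + θ - 2 * π * l / n)))
      = 4 * n * ∑' j : ℕ, modBesselI (((j : ℝ) + 1) * n) a
          * Real.sin (((j : ℝ) + 1) * n * φ) * Real.sin (((j : ℝ) + 1) * n * θ) := by
  simp only [← Real.norm_eq_abs]
  exact_mod_cast stmt_10_general n hn a φ θ
end

section
/- Let p ≥ 1 be an integer, k₀, k₁ ≥ 0, γ = p(k₀+k₁), and let j be a non-negative integer. Define on the open wedge C = {(r cos θ, r sin θ) : r > 0, 0 < θ < π/(2p)} the function h(r cos θ, r sin θ) = r^{2jp} P_j^{(k₀−1/2,k₁−1/2)}(cos 2pθ) and the weight ω(r cos θ, r sin θ) = r^{γ}(sin pθ)^{k₀}(cos pθ)^{k₁}. Then h satisfies Δh(x) + 2⟨∇h(x), ∇ log ω(x)⟩ = 0 for every x ∈ C; that is, h is harmonic for the W-invariant Dunkl Laplacian of the even dihedral system I₂(2p). -/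
open Real Finset

/-- First partial derivative (in the first coordinate) of a function on `ℝ²`. -/
noncomputable def pd1 (f : ℝ × ℝ → ℝ) (x : ℝ × ℝ) : ℝ :=
  deriv (fun s => f (s, x.2)) x.1

/-- First partial derivative (in the second coordinate) of a function on `ℝ²`. -/
noncomputable def pd2 (f : ℝ × ℝ → ℝ) (x : ℝ × ℝ) : ℝ :=
  deriv (fun s => f (x.1, s)) x.2

/-- The Jacobi polynomial
`P_j^{(α,β)}(x) = ∑_{s=0}^{j} [Γ(j+α+1)/(Γ(s+α+1)(j−s)!)]·[Γ(j+β+1)/(Γ(j−s+β+1)s!)]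
  ((x−1)/2)^s ((x+1)/2)^{j−s}`. -/
noncomputable def jacobiPoly (α β : ℝ) (j : ℕ) (x : ℝ) : ℝ :=
  ∑ s ∈ Finset.range (j + 1),
    (Real.Gamma ((j : ℝ) + α + 1) / (Real.Gamma ((s : ℝ) + α + 1) * (Nat.factorial (j - s)))) *
    (Real.Gamma ((j : ℝ) + β + 1) / (Real.Gamma ((j : ℝ) - s + β + 1) * (Nat.factorial s))) *
    ((x - 1) / 2) ^ s * ((x + 1) / 2) ^ (j - s)

/-!
The map `z ↦ z ^ p` sends the wedge to the open first quadrant, and there the weight and the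
candidate function become the pullbacks of `v ^ k₀ * u ^ k₁` and of the homogeneous polynomial
`(u² + v²) ^ j * P_j ((u² - v²) / (u² + v²))`. Both the Laplacian and the pairing of two gradients
are multiplied by `‖deriv g‖²` under composition with a holomorphic `g`, so only the case `p = 1`
remains. In the coordinates `u, v` the operator splits as a sum of two rank-one operators
`∂² + (2 * k / t) ∂`, each of which sends an even power to a multiple of the preceding one, and
harmonicity becomes the two-term recurrence of the Jacobi coefficients.
-/

open Filter Topology

section PartialDerivatives

variable {f g : ℝ × ℝ → ℝ} {q : ℝ × ℝ}

lemma pd1_congr (hfg : f =ᶠ[𝓝 q] g) : pd1 f q = pd1 g q :=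
  EventuallyEq.deriv_eq <|
    (Continuous.prodMk_left q.2).continuousAt.eventually hfg

lemma pd2_congr (hfg : f =ᶠ[𝓝 q] g) : pd2 f q = pd2 g q :=
  EventuallyEq.deriv_eq <|
    (Continuous.prodMk_right q.1).continuousAt.eventually hfg

lemma pd1_eventuallyEq (hfg : f =ᶠ[𝓝 q] g) : pd1 f =ᶠ[𝓝 q] pd1 g :=
  hfg.eventuallyEq_nhds.mono fun _ => pd1_congr

lemma pd2_eventuallyEq (hfg : f =ᶠ[𝓝 q] g) : pd2 f =ᶠ[𝓝 q] pd2 g :=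
  hfg.eventuallyEq_nhds.mono fun _ => pd2_congr

lemma pd1_eq_fderiv (hf : DifferentiableAt ℝ f q) : pd1 f q = fderiv ℝ f q (1, 0) :=
  (hf.hasFDerivAt.comp_hasDerivAt q.1
    ((hasDerivAt_id q.1).prodMk (hasDerivAt_const q.1 q.2))).deriv

lemma pd2_eq_fderiv (hf : DifferentiableAt ℝ f q) : pd2 f q = fderiv ℝ f q (0, 1) :=
  (hf.hasFDerivAt.comp_hasDerivAt q.2
    ((hasDerivAt_const q.2 q.1).prodMk (hasDerivAt_id q.2))).deriv

lemma eventually_differentiableAt_of_contDiffAt_two (hf : ContDiffAt ℝ 2 f q) :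
    ∀ᶠ y in 𝓝 q, DifferentiableAt ℝ f y :=
  (hf.eventually (by simp)).mono fun _ hy => hy.differentiableAt (by simp)

lemma differentiableAt_fderiv_apply (hf : ContDiffAt ℝ 2 f q) (e : ℝ × ℝ) :
    DifferentiableAt ℝ (fun y => fderiv ℝ f y e) q :=
  ((hf.fderiv_right (m := 1) (by norm_num)).differentiableAt (by simp)).clm_apply
    (differentiableAt_const e)

lemma differentiableAt_pd1 (hf : ContDiffAt ℝ 2 f q) : DifferentiableAt ℝ (pd1 f) q :=
  (differentiableAt_fderiv_apply hf (1, 0)).congr_of_eventuallyEq <|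
    (eventually_differentiableAt_of_contDiffAt_two hf).mono fun _ => pd1_eq_fderiv

lemma differentiableAt_pd2 (hf : ContDiffAt ℝ 2 f q) : DifferentiableAt ℝ (pd2 f) q :=
  (differentiableAt_fderiv_apply hf (0, 1)).congr_of_eventuallyEq <|
    (eventually_differentiableAt_of_contDiffAt_two hf).mono fun _ => pd2_eq_fderiv

lemma hasDerivAt_comp_curve {c : ℝ → ℝ × ℝ} {c' : ℝ × ℝ} {t : ℝ}
    (hc : HasDerivAt c c' t) (hf : DifferentiableAt ℝ f (c t)) :
    HasDerivAt (fun s => f (c s)) (pd1 f (c t) * c'.1 + pd2 f (c t) * c'.2) t := by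
  refine (hf.hasFDerivAt.comp_hasDerivAt t hc).congr_deriv ?_
  have hsplit : c' = c'.1 • ((1 : ℝ), (0 : ℝ)) + c'.2 • ((0 : ℝ), (1 : ℝ)) := by simp
  rw [pd1_eq_fderiv hf, pd2_eq_fderiv hf, hsplit, map_add, map_smul, map_smul]
  simp [mul_comm]

end PartialDerivatives

/-- The operator `f ↦ Δf + 2⟨∇f, ∇ log ω⟩` on the plane attached to a weight `ω`. -/
noncomputable def weightedLaplacian (ω f : ℝ × ℝ → ℝ) (q : ℝ × ℝ) : ℝ :=
  pd1 (pd1 f) q + pd2 (pd2 f) q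
    + 2 * (pd1 f q * pd1 (fun y => log (ω y)) q + pd2 f q * pd2 (fun y => log (ω y)) q)

lemma weightedLaplacian_congr {ω ω' f f' : ℝ × ℝ → ℝ} {q : ℝ × ℝ} (hω : ω =ᶠ[𝓝 q] ω')
    (hf : f =ᶠ[𝓝 q] f') : weightedLaplacian ω f q = weightedLaplacian ω' f' q := by
  have hlog : (fun y => log (ω y)) =ᶠ[𝓝 q] fun y => log (ω' y) := hω.fun_comp log
  simp only [weightedLaplacian, pd1_congr hlog, pd2_congr hlog, pd1_congr hf, pd2_congr hf,
    pd1_congr (pd1_eventuallyEq hf), pd2_congr (pd2_eventuallyEq hf)]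

/-- A complex function `g`, read as a map of the real plane through `(x, y) ↔ x + iy`. -/
def toPlaneMap (g : ℂ → ℂ) (q : ℝ × ℝ) : ℝ × ℝ :=
  ((g ⟨q.1, q.2⟩).re, (g ⟨q.1, q.2⟩).im)

section ConformalInvariance

lemma hasDerivAt_complex_mk_left (x y : ℝ) : HasDerivAt (fun s : ℝ => (⟨s, y⟩ : ℂ)) 1 x := by
  simpa [← Complex.mk_eq_add_mul_I] using
    (Complex.ofRealCLM.hasDerivAt (x := x)).add_const ((y : ℂ) * Complex.I)

lemma hasDerivAt_complex_mk_right (x y : ℝ) :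
    HasDerivAt (fun s : ℝ => (⟨x, s⟩ : ℂ)) Complex.I y := by
  simpa [← Complex.mk_eq_add_mul_I] using
    ((Complex.ofRealCLM.hasDerivAt (x := y)).mul_const Complex.I).const_add (x : ℂ)

variable {f w : ℝ × ℝ → ℝ} {g : ℂ → ℂ} {q : ℝ × ℝ}

lemma hasDerivAt_toPlaneMap_left (hg : DifferentiableAt ℂ g ⟨q.1, q.2⟩) :
    HasDerivAt (fun s => toPlaneMap g (s, q.2)) (toPlaneMap (deriv g) q) q.1 := by
  have hcurve := hg.hasDerivAt.comp q.1 (hasDerivAt_complex_mk_left q.1 q.2)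
  rw [mul_one] at hcurve
  exact Complex.equivRealProdCLM.hasFDerivAt.comp_hasDerivAt q.1 hcurve

-- The Cauchy–Riemann equations: the derivative is that of the first variable, times `i`.
lemma hasDerivAt_toPlaneMap_right (hg : DifferentiableAt ℂ g ⟨q.1, q.2⟩) :
    HasDerivAt (fun s => toPlaneMap g (q.1, s))
      (-(toPlaneMap (deriv g) q).2, (toPlaneMap (deriv g) q).1) q.2 := by
  have hcurve := hg.hasDerivAt.comp q.2 (hasDerivAt_complex_mk_right q.1 q.2)
  refine (Complex.equivRealProdCLM.hasFDerivAt.comp_hasDerivAt q.2 hcurve).congr_deriv ?_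
  exact Prod.ext (Complex.mul_I_re _) (Complex.mul_I_im _)

lemma differentiableAt_comp_toPlaneMap_left (hf : DifferentiableAt ℝ f (toPlaneMap g q))
    (hg : DifferentiableAt ℂ g ⟨q.1, q.2⟩) :
    DifferentiableAt ℝ (fun s => f (toPlaneMap g (s, q.2))) q.1 :=
  (hasDerivAt_comp_curve (hasDerivAt_toPlaneMap_left hg) hf).differentiableAt

lemma differentiableAt_comp_toPlaneMap_right (hf : DifferentiableAt ℝ f (toPlaneMap g q))
    (hg : DifferentiableAt ℂ g ⟨q.1, q.2⟩) :
    DifferentiableAt ℝ (fun s => f (toPlaneMap g (q.1, s))) q.2 :=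
  (hasDerivAt_comp_curve (hasDerivAt_toPlaneMap_right hg) hf).differentiableAt

lemma pd1_comp_toPlaneMap (hf : DifferentiableAt ℝ f (toPlaneMap g q))
    (hg : DifferentiableAt ℂ g ⟨q.1, q.2⟩) :
    pd1 (fun y => f (toPlaneMap g y)) q =
      pd1 f (toPlaneMap g q) * (toPlaneMap (deriv g) q).1
        + pd2 f (toPlaneMap g q) * (toPlaneMap (deriv g) q).2 :=
  (hasDerivAt_comp_curve (hasDerivAt_toPlaneMap_left hg) hf).deriv

lemma pd2_comp_toPlaneMap (hf : DifferentiableAt ℝ f (toPlaneMap g q))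
    (hg : DifferentiableAt ℂ g ⟨q.1, q.2⟩) :
    pd2 (fun y => f (toPlaneMap g y)) q =
      pd1 f (toPlaneMap g q) * -(toPlaneMap (deriv g) q).2
        + pd2 f (toPlaneMap g q) * (toPlaneMap (deriv g) q).1 :=
  (hasDerivAt_comp_curve (hasDerivAt_toPlaneMap_right hg) hf).deriv

lemma continuousAt_toPlaneMap (hg : ContinuousAt g ⟨q.1, q.2⟩) :
    ContinuousAt (toPlaneMap g) q :=
  Complex.equivRealProdCLM.continuous.continuousAt.comp
    (ContinuousAt.comp (f := Complex.equivRealProdCLM.symm) hg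
      Complex.equivRealProdCLM.symm.continuous.continuousAt)

lemma eventually_differentiableAt_comp_toPlaneMap (hf : ContDiffAt ℝ 2 f (toPlaneMap g q))
    (hg : AnalyticAt ℂ g ⟨q.1, q.2⟩) :
    ∀ᶠ y in 𝓝 q, DifferentiableAt ℝ f (toPlaneMap g y)
      ∧ DifferentiableAt ℂ g ⟨y.1, y.2⟩ := by
  have hmk : Tendsto (fun y : ℝ × ℝ => (⟨y.1, y.2⟩ : ℂ)) (𝓝 q) (𝓝 ⟨q.1, q.2⟩) :=
    Complex.equivRealProdCLM.symm.continuous.tendsto q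
  have hgd : ∀ᶠ z in 𝓝 (⟨q.1, q.2⟩ : ℂ), DifferentiableAt ℂ g z :=
    hg.eventually_analyticAt.mono fun _ hz => hz.differentiableAt
  exact ((continuousAt_toPlaneMap hg.continuousAt).eventually
    (eventually_differentiableAt_of_contDiffAt_two hf)).and (hmk.eventually hgd)

lemma norm_deriv_sq_eq_toPlaneMap :
    ‖deriv g ⟨q.1, q.2⟩‖ ^ 2 = (toPlaneMap (deriv g) q).1 ^ 2 + (toPlaneMap (deriv g) q).2 ^ 2 := by
  rw [Complex.sq_norm, Complex.normSq_apply, toPlaneMap, sq, sq]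

lemma pd1_pd1_comp_toPlaneMap (hf : ContDiffAt ℝ 2 f (toPlaneMap g q))
    (hg : AnalyticAt ℂ g ⟨q.1, q.2⟩) :
    pd1 (pd1 (fun y => f (toPlaneMap g y))) q =
      pd1 (fun y => pd1 f (toPlaneMap g y)) q * (toPlaneMap (deriv g) q).1
        + pd1 f (toPlaneMap g q) * (toPlaneMap (deriv (deriv g)) q).1
        + (pd1 (fun y => pd2 f (toPlaneMap g y)) q * (toPlaneMap (deriv g) q).2
          + pd2 f (toPlaneMap g q) * (toPlaneMap (deriv (deriv g)) q).2) := by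
  have hfirst : pd1 (fun y => f (toPlaneMap g y)) =ᶠ[𝓝 q] fun y =>
      pd1 f (toPlaneMap g y) * (toPlaneMap (deriv g) y).1
        + pd2 f (toPlaneMap g y) * (toPlaneMap (deriv g) y).2 :=
    (eventually_differentiableAt_comp_toPlaneMap hf hg).mono fun _ hy =>
      pd1_comp_toPlaneMap hy.1 hy.2
  have hg' := hasDerivAt_toPlaneMap_left hg.deriv.differentiableAt
  have hf₁ := differentiableAt_comp_toPlaneMap_left (differentiableAt_pd1 hf) hg.differentiableAt
  have hf₂ := differentiableAt_comp_toPlaneMap_left (differentiableAt_pd2 hf) hg.differentiableAt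
  rw [pd1_congr hfirst]
  exact ((hf₁.hasDerivAt.mul (hasFDerivAt_fst.comp_hasDerivAt q.1 hg')).add
    (hf₂.hasDerivAt.mul (hasFDerivAt_snd.comp_hasDerivAt q.1 hg'))).deriv

lemma pd2_pd2_comp_toPlaneMap (hf : ContDiffAt ℝ 2 f (toPlaneMap g q))
    (hg : AnalyticAt ℂ g ⟨q.1, q.2⟩) :
    pd2 (pd2 (fun y => f (toPlaneMap g y))) q =
      pd2 (fun y => pd1 f (toPlaneMap g y)) q * -(toPlaneMap (deriv g) q).2
        + pd1 f (toPlaneMap g q) * -(toPlaneMap (deriv (deriv g)) q).1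
        + (pd2 (fun y => pd2 f (toPlaneMap g y)) q * (toPlaneMap (deriv g) q).1
          + pd2 f (toPlaneMap g q) * -(toPlaneMap (deriv (deriv g)) q).2) := by
  have hfirst : pd2 (fun y => f (toPlaneMap g y)) =ᶠ[𝓝 q] fun y =>
      pd1 f (toPlaneMap g y) * -(toPlaneMap (deriv g) y).2
        + pd2 f (toPlaneMap g y) * (toPlaneMap (deriv g) y).1 :=
    (eventually_differentiableAt_comp_toPlaneMap hf hg).mono fun _ hy =>
      pd2_comp_toPlaneMap hy.1 hy.2
  have hg' := hasDerivAt_toPlaneMap_right hg.deriv.differentiableAt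
  have hf₁ := differentiableAt_comp_toPlaneMap_right (differentiableAt_pd1 hf) hg.differentiableAt
  have hf₂ := differentiableAt_comp_toPlaneMap_right (differentiableAt_pd2 hf) hg.differentiableAt
  rw [pd2_congr hfirst]
  exact ((hf₁.hasDerivAt.mul (hasFDerivAt_snd.comp_hasDerivAt q.2 hg').neg).add
    (hf₂.hasDerivAt.mul (hasFDerivAt_fst.comp_hasDerivAt q.2 hg'))).deriv

lemma laplacian_comp_toPlaneMap (hf : ContDiffAt ℝ 2 f (toPlaneMap g q))
    (hg : AnalyticAt ℂ g ⟨q.1, q.2⟩) :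
    pd1 (pd1 (fun y => f (toPlaneMap g y))) q + pd2 (pd2 (fun y => f (toPlaneMap g y))) q =
      ‖deriv g ⟨q.1, q.2⟩‖ ^ 2
        * (pd1 (pd1 f) (toPlaneMap g q) + pd2 (pd2 f) (toPlaneMap g q)) := by
  have hf₁ := differentiableAt_pd1 hf
  have hf₂ := differentiableAt_pd2 hf
  have hgq := hg.differentiableAt
  rw [pd1_pd1_comp_toPlaneMap hf hg, pd2_pd2_comp_toPlaneMap hf hg, pd1_comp_toPlaneMap hf₁ hgq,
    pd1_comp_toPlaneMap hf₂ hgq, pd2_comp_toPlaneMap hf₁ hgq, pd2_comp_toPlaneMap hf₂ hgq,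
    norm_deriv_sq_eq_toPlaneMap]
  ring

lemma gradient_pairing_comp_toPlaneMap (hf : DifferentiableAt ℝ f (toPlaneMap g q))
    (hw : DifferentiableAt ℝ w (toPlaneMap g q)) (hg : DifferentiableAt ℂ g ⟨q.1, q.2⟩) :
    pd1 (fun y => f (toPlaneMap g y)) q * pd1 (fun y => w (toPlaneMap g y)) q
        + pd2 (fun y => f (toPlaneMap g y)) q * pd2 (fun y => w (toPlaneMap g y)) q =
      ‖deriv g ⟨q.1, q.2⟩‖ ^ 2
        * (pd1 f (toPlaneMap g q) * pd1 w (toPlaneMap g q)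
          + pd2 f (toPlaneMap g q) * pd2 w (toPlaneMap g q)) := by
  rw [pd1_comp_toPlaneMap hf hg, pd1_comp_toPlaneMap hw hg, pd2_comp_toPlaneMap hf hg,
    pd2_comp_toPlaneMap hw hg, norm_deriv_sq_eq_toPlaneMap]
  ring

theorem weightedLaplacian_comp_toPlaneMap {ω : ℝ × ℝ → ℝ}
    (hω : DifferentiableAt ℝ (fun y => log (ω y)) (toPlaneMap g q))
    (hf : ContDiffAt ℝ 2 f (toPlaneMap g q)) (hg : AnalyticAt ℂ g ⟨q.1, q.2⟩) :
    weightedLaplacian (fun y => ω (toPlaneMap g y)) (fun y => f (toPlaneMap g y)) q =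
      ‖deriv g ⟨q.1, q.2⟩‖ ^ 2 * weightedLaplacian ω f (toPlaneMap g q) := by
  have hgrad := gradient_pairing_comp_toPlaneMap (hf.differentiableAt (by simp)) hω
    hg.differentiableAt
  rw [weightedLaplacian, laplacian_comp_toPlaneMap hf hg, hgrad, weightedLaplacian]
  ring

end ConformalInvariance

lemma toPlaneMap_pow_polar (p : ℕ) (r θ : ℝ) :
    toPlaneMap (fun z => z ^ p) (r * cos θ, r * sin θ) =
      (r ^ p * cos (p * θ), r ^ p * sin (p * θ)) := by
  have hpolar : (⟨r * cos θ, r * sin θ⟩ : ℂ) = r * (Complex.cos θ + Complex.sin θ * Complex.I) := by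
    apply Complex.ext <;> simp [← Complex.ofReal_cos, ← Complex.ofReal_sin]
  have hpow : (⟨r * cos θ, r * sin θ⟩ : ℂ) ^ p =
      ⟨r ^ p * cos (p * θ), r ^ p * sin (p * θ)⟩ := by
    rw [hpolar, mul_pow, Complex.cos_add_sin_mul_I_pow, Complex.mk_eq_add_mul_I]
    push_cast
    ring
  simp only [toPlaneMap, hpow]

lemma eventually_nhds_polar {a b r θ : ℝ} (ha : -π ≤ a) (hb : b ≤ π) (hr : 0 < r)
    (hθ : θ ∈ Set.Ioo a b) {P : ℝ × ℝ → Prop}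
    (hP : ∀ r θ : ℝ, 0 < r → θ ∈ Set.Ioo a b → P (r * cos θ, r * sin θ)) :
    ∀ᶠ q in 𝓝 (r * cos θ, r * sin θ), P q := by
  have hsub : Set.Ioi (0 : ℝ) ×ˢ Set.Ioo a b ⊆ polarCoord.symm.source :=
    Set.prod_mono_right (Set.Ioo_subset_Ioo ha hb)
  have hopen : IsOpen (polarCoord.symm '' Set.Ioi (0 : ℝ) ×ˢ Set.Ioo a b) :=
    polarCoord.symm.isOpen_image_of_subset_source (isOpen_Ioi.prod isOpen_Ioo) hsub
  filter_upwards [hopen.mem_nhds ⟨(r, θ), ⟨hr, hθ⟩, rfl⟩]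
  rintro _ ⟨⟨r', θ'⟩, ⟨hr', hθ'⟩, rfl⟩
  exact hP r' θ' hr' hθ'

/-- The coefficient of `((x - 1) / 2) ^ s * ((x + 1) / 2) ^ (j - s)` in `jacobiPoly α β j x`. -/
noncomputable def jacobiCoeff (α β : ℝ) (j s : ℕ) : ℝ :=
  (Gamma (j + α + 1) / (Gamma (s + α + 1) * (j - s).factorial))
    * (Gamma (j + β + 1) / (Gamma (j - s + β + 1) * s.factorial))

/-- The homogenization `(u² + v²) ^ j * P_j ((u² - v²) / (u² + v²))` of the Jacobi polynomial,
written as a polynomial in `(u, v)`. -/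
noncomputable def jacobiForm (α β : ℝ) (j : ℕ) (q : ℝ × ℝ) : ℝ :=
  ∑ s ∈ range (j + 1),
    (-1) ^ s * jacobiCoeff α β j s * (q.1 ^ (2 * (j - s)) * q.2 ^ (2 * s))

section JacobiForm

lemma jacobiForm_polar (α β : ℝ) (j : ℕ) (r θ : ℝ) :
    jacobiForm α β j (r * cos θ, r * sin θ) = r ^ (2 * j) * jacobiPoly α β j (cos (2 * θ)) := by
  have hsin : (cos (2 * θ) - 1) / 2 = -1 * sin θ ^ 2 := by
    rw [cos_two_mul, cos_sq']; ring
  have hcos : (cos (2 * θ) + 1) / 2 = cos θ ^ 2 := by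
    rw [cos_two_mul]; ring
  rw [jacobiForm, jacobiPoly, mul_sum, hsin, hcos]
  refine sum_congr rfl fun s hs => ?_
  obtain ⟨t, rfl⟩ := Nat.exists_eq_add_of_le (mem_range_succ_iff.1 hs)
  rw [Nat.add_sub_cancel_left, jacobiCoeff, Nat.add_sub_cancel_left]
  ring

lemma contDiff_jacobiForm (α β : ℝ) (j : ℕ) : ContDiff ℝ 2 (jacobiForm α β j) := by
  unfold jacobiForm
  fun_prop

lemma add_natCast_ne_neg_natCast {a : ℝ} (ha : ∀ n : ℕ, a ≠ -n) (s n : ℕ) :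
    s + a ≠ -n := fun h => ha (s + n) (by push_cast; linarith)

lemma jacobiCoeff_succ {α β : ℝ} (hα : ∀ n : ℕ, α + 1 ≠ -n) (hβ : ∀ n : ℕ, β + 1 ≠ -n)
    {j s : ℕ} (hs : s < j) :
    jacobiCoeff α β j (s + 1) * ((s + 1) * (s + 1 + α)) =
      jacobiCoeff α β j s * ((j - s) * (j - s + β)) := by
  obtain ⟨t, rfl⟩ := Nat.exists_eq_add_of_lt hs
  have hu := add_natCast_ne_neg_natCast hα s
  have hv := add_natCast_ne_neg_natCast hβ t
  have hu₀ : (s : ℝ) + (α + 1) ≠ 0 := by simpa using hu 0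
  have hv₀ : (t : ℝ) + (β + 1) ≠ 0 := by simpa using hv 0
  have hΓu := Gamma_ne_zero hu
  have hΓv := Gamma_ne_zero hv
  have hsub : s + t + 1 - s = t + 1 := by omega
  have hsub' : s + t + 1 - (s + 1) = t := by omega
  have hΓs : Gamma ((s + 1 : ℕ) + α + 1) = (s + (α + 1)) * Gamma (s + (α + 1)) := by
    rw [← Gamma_add_one hu₀]; push_cast; ring_nf
  have hΓt : Gamma ((s + t + 1 : ℕ) - s + β + 1) = (t + (β + 1)) * Gamma (t + (β + 1)) := by
    rw [← Gamma_add_one hv₀]; push_cast; ring_nf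
  have hΓs' : (s : ℝ) + α + 1 = s + (α + 1) := by ring
  have hΓt' : ((s + t + 1 : ℕ) : ℝ) - (s + 1 : ℕ) + β + 1 = t + (β + 1) := by push_cast; ring
  simp only [jacobiCoeff, hsub, hsub', hΓs, hΓt, hΓs', hΓt', Nat.factorial_succ]
  push_cast
  field_simp
  ring

variable {ι : Type*} (S : Finset ι) (c : ι → ℝ) (m n : ι → ℕ)

lemma pd1_sum_monomial :
    pd1 (fun q => ∑ i ∈ S, c i * (q.1 ^ m i * q.2 ^ n i)) =
      fun q => ∑ i ∈ S, c i * m i * (q.1 ^ (m i - 1) * q.2 ^ n i) := by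
  funext q
  refine (HasDerivAt.fun_sum fun i _ =>
    ((hasDerivAt_pow (m i) q.1).mul_const (q.2 ^ n i)).const_mul (c i)).deriv.trans ?_
  exact sum_congr rfl fun i _ => by ring

lemma pd2_sum_monomial :
    pd2 (fun q => ∑ i ∈ S, c i * (q.1 ^ m i * q.2 ^ n i)) =
      fun q => ∑ i ∈ S, c i * n i * (q.1 ^ m i * q.2 ^ (n i - 1)) := by
  funext q
  refine (HasDerivAt.fun_sum fun i _ =>
    ((hasDerivAt_pow (n i) q.2).const_mul (q.1 ^ m i)).const_mul (c i)).deriv.trans ?_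
  exact sum_congr rfl fun i _ => by ring

end JacobiForm

/-- The weight `v ^ k₀ * u ^ k₁` on the quadrant `u, v > 0`: the case `p = 1` of the dihedral
weight, in Cartesian coordinates. -/
noncomputable def quadrantWeight (k₀ k₁ : ℝ) (q : ℝ × ℝ) : ℝ :=
  q.2 ^ k₀ * q.1 ^ k₁

section Quadrant

variable (k₀ k₁ : ℝ) {q : ℝ × ℝ}

lemma log_quadrantWeight (hu : 0 < q.1) (hv : 0 < q.2) :
    log (quadrantWeight k₀ k₁ q) = k₀ * log q.2 + k₁ * log q.1 := by
  rw [quadrantWeight, log_mul (by positivity) (by positivity), log_rpow hv, log_rpow hu]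

lemma log_quadrantWeight_eventuallyEq (hu : 0 < q.1) (hv : 0 < q.2) :
    (fun y => log (quadrantWeight k₀ k₁ y)) =ᶠ[𝓝 q] fun y => k₀ * log y.2 + k₁ * log y.1 := by
  filter_upwards [continuousAt_fst.eventually (lt_mem_nhds hu),
    continuousAt_snd.eventually (lt_mem_nhds hv)] with y using log_quadrantWeight k₀ k₁

lemma differentiableAt_log_quadrantWeight (hu : 0 < q.1) (hv : 0 < q.2) :
    DifferentiableAt ℝ (fun y => log (quadrantWeight k₀ k₁ y)) q :=
  (((differentiableAt_snd.log hv.ne').const_mul k₀).add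
    ((differentiableAt_fst.log hu.ne').const_mul k₁)).congr_of_eventuallyEq
      (log_quadrantWeight_eventuallyEq k₀ k₁ hu hv)

lemma pd1_log_quadrantWeight (hu : 0 < q.1) (hv : 0 < q.2) :
    pd1 (fun y => log (quadrantWeight k₀ k₁ y)) q = k₁ / q.1 := by
  rw [pd1_congr (log_quadrantWeight_eventuallyEq k₀ k₁ hu hv), div_eq_mul_inv]
  exact (((hasDerivAt_log hu.ne').const_mul k₁).const_add (k₀ * log q.2)).deriv

lemma pd2_log_quadrantWeight (hu : 0 < q.1) (hv : 0 < q.2) :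
    pd2 (fun y => log (quadrantWeight k₀ k₁ y)) q = k₀ / q.2 := by
  rw [pd2_congr (log_quadrantWeight_eventuallyEq k₀ k₁ hu hv), div_eq_mul_inv]
  exact (((hasDerivAt_log hv.ne').const_mul k₀).add_const (k₁ * log q.1)).deriv

-- The left side is the operator `∂² + (2 * k / t) ∂` applied to `t ^ (2 * n)`.
lemma rankOne_even_pow (k : ℝ) (n : ℕ) {t : ℝ} (ht : t ≠ 0) :
    ((2 * n : ℕ) : ℝ) * (2 * n - 1 : ℕ) * t ^ (2 * n - 1 - 1)
        + 2 * ((2 * n : ℕ) * t ^ (2 * n - 1) * (k / t)) =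
      4 * (n * (n + (k - 1 / 2))) * t ^ (2 * (n - 1)) := by
  rcases n with _ | n
  · simp
  · have hsub : 2 * (n + 1) - 1 = 2 * n + 1 := by omega
    rw [hsub, Nat.add_sub_cancel, Nat.add_sub_cancel]
    push_cast
    field_simp
    ring

lemma weightedLaplacian_sum_even_monomial {ι : Type*} (S : Finset ι) (c : ι → ℝ) (m n : ι → ℕ)
    (hu : 0 < q.1) (hv : 0 < q.2) :
    weightedLaplacian (quadrantWeight k₀ k₁)
        (fun y => ∑ i ∈ S, c i * (y.1 ^ (2 * m i) * y.2 ^ (2 * n i))) q =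
      4 * ∑ i ∈ S, c i *
        (m i * (m i + (k₁ - 1 / 2)) * (q.1 ^ (2 * (m i - 1)) * q.2 ^ (2 * n i))
          + n i * (n i + (k₀ - 1 / 2)) * (q.1 ^ (2 * m i) * q.2 ^ (2 * (n i - 1)))) := by
  simp only [weightedLaplacian, pd1_sum_monomial, pd2_sum_monomial,
    pd1_log_quadrantWeight k₀ k₁ hu hv, pd2_log_quadrantWeight k₀ k₁ hu hv,
    sum_mul, mul_sum, ← sum_add_distrib]
  refine sum_congr rfl fun i _ => ?_
  linear_combination c i * q.2 ^ (2 * n i) * rankOne_even_pow k₁ (m i) hu.ne'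
    + c i * q.1 ^ (2 * m i) * rankOne_even_pow k₀ (n i) hv.ne'

variable {k₀ k₁}

theorem weightedLaplacian_jacobiForm (hk₀ : ∀ n : ℕ, k₀ + 1 / 2 ≠ -n)
    (hk₁ : ∀ n : ℕ, k₁ + 1 / 2 ≠ -n) (j : ℕ) (hu : 0 < q.1) (hv : 0 < q.2) :
    weightedLaplacian (quadrantWeight k₀ k₁) (jacobiForm (k₀ - 1 / 2) (k₁ - 1 / 2) j) q = 0 := by
  have hα : ∀ n : ℕ, k₀ - 1 / 2 + 1 ≠ -n := fun n h => hk₀ n (by linarith)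
  have hβ : ∀ n : ℕ, k₁ - 1 / 2 + 1 ≠ -n := fun n h => hk₁ n (by linarith)
  refine (weightedLaplacian_sum_even_monomial k₀ k₁ (range (j + 1)) _ (fun s => j - s)
    (fun s => s) hu hv).trans ?_
  simp only [mul_add (_ * jacobiCoeff _ _ _ _), sum_add_distrib]
  -- Only the `v`-terms with `s ≥ 1` and the `u`-terms with `s < j` are nonzero; they cancel after
  -- a shift of the index.
  rw [sum_range_succ, sum_range_succ' _ j]
  simp only [Nat.sub_self, Nat.cast_zero, zero_mul, mul_zero, add_zero, ← sum_add_distrib]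
  rw [mul_eq_zero_of_right]
  refine sum_eq_zero fun s hs => ?_
  have hsj := mem_range.1 hs
  have hrec := jacobiCoeff_succ hα hβ hsj
  rw [Nat.add_sub_cancel, Nat.sub_sub, Nat.cast_sub hsj.le, pow_succ]
  push_cast
  linear_combination -((-1) ^ s * (q.1 ^ (2 * (j - (s + 1))) * q.2 ^ (2 * s))) * hrec

end Quadrant

lemma sin_cos_pos_of_mem_wedge {p : ℕ} (hp : 1 ≤ p) {θ : ℝ} (hθ : θ ∈ Set.Ioo 0 (π / (2 * p))) :
    0 < sin (p * θ) ∧ 0 < cos (p * θ) := by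
  have hp₀ : (0 : ℝ) < p := by exact_mod_cast hp
  have hpos : 0 < p * θ := mul_pos hp₀ hθ.1
  have hlt : p * θ < π / 2 := by
    have := (lt_div_iff₀ (by positivity)).1 hθ.2
    linarith
  exact ⟨sin_pos_of_pos_of_lt_pi hpos (by linarith [pi_pos]),
    cos_pos_of_mem_Ioo ⟨by linarith [pi_pos], hlt⟩⟩

lemma jacobiForm_toPlaneMap_pow (α β : ℝ) (j p : ℕ) (r θ : ℝ) :
    jacobiForm α β j (toPlaneMap (fun z => z ^ p) (r * cos θ, r * sin θ)) =
      r ^ (2 * j * p) * jacobiPoly α β j (cos (2 * p * θ)) := by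
  rw [toPlaneMap_pow_polar, jacobiForm_polar, ← pow_mul, mul_comm p, mul_assoc 2 (p : ℝ)]

lemma quadrantWeight_toPlaneMap_pow (k₀ k₁ : ℝ) (p : ℕ) {r θ : ℝ} (hr : 0 < r)
    (hsin : 0 ≤ sin (p * θ)) (hcos : 0 ≤ cos (p * θ)) :
    quadrantWeight k₀ k₁ (toPlaneMap (fun z => z ^ p) (r * cos θ, r * sin θ)) =
      r ^ (p * (k₀ + k₁)) * sin (p * θ) ^ k₀ * cos (p * θ) ^ k₁ := by
  have hrp : r ^ (p * (k₀ + k₁)) = (r ^ p) ^ k₀ * (r ^ p) ^ k₁ := by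
    rw [rpow_mul hr.le, rpow_natCast, rpow_add (pow_pos hr p)]
  rw [toPlaneMap_pow_polar, quadrantWeight, mul_rpow (by positivity) hsin,
    mul_rpow (by positivity) hcos, hrp]
  ring

lemma toPlaneMap_pow_mem_quadrant {p : ℕ} (hp : 1 ≤ p) {r θ : ℝ} (hr : 0 < r)
    (hθ : θ ∈ Set.Ioo 0 (π / (2 * p))) :
    0 < (toPlaneMap (fun z => z ^ p) (r * cos θ, r * sin θ)).1
      ∧ 0 < (toPlaneMap (fun z => z ^ p) (r * cos θ, r * sin θ)).2 := by
  obtain ⟨hsin, hcos⟩ := sin_cos_pos_of_mem_wedge hp hθ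
  rw [toPlaneMap_pow_polar]
  exact ⟨mul_pos (pow_pos hr p) hcos, mul_pos (pow_pos hr p) hsin⟩

theorem stmt_13_general (p : ℕ) (hp : 1 ≤ p) (k₀ k₁ : ℝ) (hk₀ : ∀ n : ℕ, k₀ + 1 / 2 ≠ -n)
    (hk₁ : ∀ n : ℕ, k₁ + 1 / 2 ≠ -n)
    (γ : ℝ) (hγ : γ = p * (k₀ + k₁)) (j : ℕ)
    (h : ℝ × ℝ → ℝ)
    (hh : ∀ r θ : ℝ, 0 < r → 0 < θ → θ < π / (2 * p) →
        h (r * cos θ, r * sin θ)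
          = r ^ (2 * j * p) * jacobiPoly (k₀ - 1 / 2) (k₁ - 1 / 2) j (cos (2 * p * θ)))
    (ω : ℝ × ℝ → ℝ)
    (hω : ∀ r θ : ℝ, 0 < r → 0 < θ → θ < π / (2 * p) →
        ω (r * cos θ, r * sin θ) = r ^ γ * sin (p * θ) ^ k₀ * cos (p * θ) ^ k₁) :
    ∀ r θ : ℝ, 0 < r → 0 < θ → θ < π / (2 * p) →
      pd1 (pd1 h) (r * cos θ, r * sin θ) + pd2 (pd2 h) (r * cos θ, r * sin θ)
        + 2 * (pd1 h (r * cos θ, r * sin θ) * pd1 (fun y => log (ω y)) (r * cos θ, r * sin θ)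
            + pd2 h (r * cos θ, r * sin θ) * pd2 (fun y => log (ω y)) (r * cos θ, r * sin θ))
      = 0 := by
  intro r θ hr hθ₀ hθ₁
  have hwedge : π / (2 * p) ≤ π :=
    div_le_self pi_pos.le (by exact_mod_cast (by omega : 1 ≤ 2 * p))
  have eventually_near {P : ℝ × ℝ → Prop} :=
    eventually_nhds_polar (P := P) (neg_nonpos.2 pi_pos.le) hwedge hr ⟨hθ₀, hθ₁⟩
  have hh_pull : h =ᶠ[𝓝 (r * cos θ, r * sin θ)] fun y =>
      jacobiForm (k₀ - 1 / 2) (k₁ - 1 / 2) j (toPlaneMap (fun z => z ^ p) y) :=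
    eventually_near fun r θ hr hθ =>
      (hh r θ hr hθ.1 hθ.2).trans (jacobiForm_toPlaneMap_pow _ _ j p r θ).symm
  have hω_pull : ω =ᶠ[𝓝 (r * cos θ, r * sin θ)] fun y =>
      quadrantWeight k₀ k₁ (toPlaneMap (fun z => z ^ p) y) :=
    eventually_near fun r θ hr hθ => by
      obtain ⟨hsin, hcos⟩ := sin_cos_pos_of_mem_wedge hp hθ
      simp only [hω r θ hr hθ.1 hθ.2, quadrantWeight_toPlaneMap_pow k₀ k₁ p hr hsin.le hcos.le, hγ]
  obtain ⟨hu, hv⟩ := toPlaneMap_pow_mem_quadrant hp hr ⟨hθ₀, hθ₁⟩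
  change weightedLaplacian ω h (r * cos θ, r * sin θ) = 0
  rw [weightedLaplacian_congr hω_pull hh_pull, weightedLaplacian_comp_toPlaneMap
    (differentiableAt_log_quadrantWeight k₀ k₁ hu hv) (contDiff_jacobiForm _ _ j).contDiffAt
    (by fun_prop), weightedLaplacian_jacobiForm hk₀ hk₁ j hu hv, mul_zero]

/-- The `W`-invariant harmonic
`h(r cos θ, r sin θ) = r^{2jp} P_j^{(k₀−1/2,k₁−1/2)}(cos 2pθ)` of the even dihedral system
`I₂(2p)` satisfies `Δh + 2⟨∇h, ∇ log ω⟩ = 0` on the wedge `0 < θ < π/(2p)`, where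
`ω(r cos θ, r sin θ) = r^γ (sin pθ)^{k₀}(cos pθ)^{k₁}` and `γ = p(k₀+k₁)`. -/
theorem stmt_13 (p : ℕ) (hp : 1 ≤ p) (k₀ k₁ : ℝ) (hk₀ : 0 ≤ k₀) (hk₁ : 0 ≤ k₁)
    (γ : ℝ) (hγ : γ = p * (k₀ + k₁)) (j : ℕ)
    (h : ℝ × ℝ → ℝ)
    (hh : ∀ r θ : ℝ, 0 < r → 0 < θ → θ < π / (2 * p) →
        h (r * cos θ, r * sin θ)
          = r ^ (2 * j * p) * jacobiPoly (k₀ - 1 / 2) (k₁ - 1 / 2) j (cos (2 * p * θ)))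
    (ω : ℝ × ℝ → ℝ)
    (hω : ∀ r θ : ℝ, 0 < r → 0 < θ → θ < π / (2 * p) →
        ω (r * cos θ, r * sin θ) = r ^ γ * sin (p * θ) ^ k₀ * cos (p * θ) ^ k₁) :
    ∀ r θ : ℝ, 0 < r → 0 < θ → θ < π / (2 * p) →
      pd1 (pd1 h) (r * cos θ, r * sin θ) + pd2 (pd2 h) (r * cos θ, r * sin θ)
        + 2 * (pd1 h (r * cos θ, r * sin θ) * pd1 (fun y => log (ω y)) (r * cos θ, r * sin θ)
            + pd2 h (r * cos θ, r * sin θ) * pd2 (fun y => log (ω y)) (r * cos θ, r * sin θ))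
      = 0 :=
  have not_pole {k : ℝ} (hk : 0 ≤ k) (n : ℕ) : k + 1 / 2 ≠ -n :=
    ((neg_nonpos.2 n.cast_nonneg).trans_lt (by positivity)).ne'
  stmt_13_general p hp k₀ k₁ (not_pole hk₀) (not_pole hk₁) γ hγ j h hh ω hω
end
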